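/- Suppose U_1, …, U_n are unitary operators on E and P_1, …, P_n are orthogonal projections on E satisfying: (a) U_i U_j = U_j U_i for all i, j; (b) U_1⋯U_n = I_E; (c) P_i + U_i* P_j U_i = P_j + U_j* P_i U_j ≤ I_E for all i ≠ j; and (d) P_1 + U_1* P_2 U_1 + U_1* U_2* P_3 U_2 U_1 + ⋯ + U_1*⋯U_{n−1}* P_n U_{n−1}⋯U_1 = I_E. For each i let M_i be the bounded operator on ℓ²(ℕ, E) determined by (M_i f)(0) = U_i((I − P_i) f(0)) and (M_i f)(m+1) = U_i((I − P_i) f(m+1)) + U_i(P_i f(m)) for all m ∈ ℕ. Then each M_i is an isometry, M_i M_j = M_j M_i for all i, j, and the product M_1 M_2 ⋯ M_n equals the unilateral shift S on ℓ²(ℕ, E), i.e., (S f)(0) = 0 and (S f)(m+1) = f(m). (In other words, a model n-isometry is an n-isometry: the isometric symbols Φ_i(z) = U_i(P_i^⊥ + z P_i) multiply to z I_E.) -/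

import Mathlib

open ContinuousLinearMap

/-- The product `U_{k-1} * ⋯ * U_0` of the unitaries with index `< k`
(so that `prefixProd U k` acts as `U_{k-1} ⋯ U_1` in 1-based notation). -/
noncomputable def prefixProd {E : Type*} [NormedAddCommGroup E] [InnerProductSpace ℂ E]
    {n : ℕ} (U : Fin n → E →L[ℂ] E) (k : Fin n) : E →L[ℂ] E :=
  ((((List.finRange n).filter (fun i => i < k)).reverse).map U).prod

/-! Multiplication operators compose as their symbols do, so the claims about the `M_i` become
identities between operator-valued power series. If `W` is unitary then
`(P^⊥ + z P) W = W (R^⊥ + z R)` with `R = W^* P W`, and if moreover `R Q = 0` then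
`(R^⊥ + z R) (Q^⊥ + z Q) = (Q + R)^⊥ + z (Q + R)`. Hence a product of symbols `U_i (P_i^⊥ + z P_i)`
is again of this form as long as the transported projections are mutually orthogonal; positivity of
`I - ∑ R_i` forces this orthogonality. Condition (c) then makes two-fold products symmetric in
`i, j`, and conditions (b), (d) make the `n`-fold product equal to `z`. -/

open Finset.HasAntidiagonal (antidiagonal)
open PowerSeries (C X coeff)

section Monoid

variable {R : Type*} [Monoid R]

theorem prod_reverse_ofFn_of_commute {n : ℕ} {f : Fin n → R} (hf : ∀ i j, Commute (f i) (f j)) :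
    (List.ofFn f).reverse.prod = (List.ofFn f).prod :=
  ((List.reverse_perm _).symm.prod_eq' (List.pairwise_ofFn.2 fun _ _ _ => hf _ _)).symm

end Monoid

section BCLSymbol

variable {R : Type*} [Ring R] {u v p p' q : R}

/-- The Berger–Coburn–Lebow symbol `u (p^⊥ + z p)`, as a power series in `z`; the coefficient ring
need not be commutative, but `z` commutes with all coefficients. -/
noncomputable def bclSymbol (u p : R) : PowerSeries R := C u * (C (1 - p) + X * C p)

theorem bclSymbol_eq_C_add_X_mul_C : bclSymbol u p = C (u * (1 - p)) + X * C (u * p) := by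
  rw [bclSymbol, mul_add, ← mul_assoc (C u) X, (PowerSeries.commute_X _).eq, mul_assoc, map_mul,
    map_mul]

theorem bclSymbol_one_zero : bclSymbol (1 : R) 0 = 1 := by simp [bclSymbol]

theorem bclSymbol_one_one : bclSymbol (1 : R) 1 = X := by simp [bclSymbol]

theorem bclSymbol_mul_C (h : p * v = v * p') : bclSymbol u p * C v = bclSymbol (u * v) p' := by
  have h' : (1 - p) * v = v * (1 - p') := by rw [sub_mul, h, one_mul, mul_sub, mul_one]
  simp only [bclSymbol_eq_C_add_X_mul_C, add_mul, mul_assoc, ← map_mul, h, h']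

theorem bclSymbol_mul_bclSymbol_one (h : p * q = 0) :
    bclSymbol u p * bclSymbol 1 q = bclSymbol u (q + p) := by
  have hC : C p * C q = (0 : PowerSeries R) := by rw [← map_mul, h, map_zero]
  have hCX : C p * (X * C q) = (0 : PowerSeries R) := by
    rw [← mul_assoc, (PowerSeries.commute_X _).eq, mul_assoc, hC, mul_zero]
  have hmul : (1 - C p + X * C p) * (1 - C q + X * C q) =
      (1 - (C q + C p) + X * (C q + C p) : PowerSeries R) := by
    simp only [add_mul, sub_mul, mul_add, mul_sub, one_mul, mul_one, mul_assoc, hC, hCX, mul_zero]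
    abel
  simp only [bclSymbol, map_sub, map_add, map_one, one_mul, mul_assoc, hmul]

theorem bclSymbol_mul_bclSymbol (hv : p * v = v * p') (h : p' * q = 0) :
    bclSymbol u p * bclSymbol v q = bclSymbol (u * v) (q + p') := by
  have hq : bclSymbol v q = C v * bclSymbol 1 q := by simp [bclSymbol]
  rw [hq, ← mul_assoc, bclSymbol_mul_C hv, bclSymbol_mul_bclSymbol_one h]

end BCLSymbol

section StarMul

variable {R : Type*} [Monoid R] [StarMul R] {v p : R}

theorem mul_eq_mul_star_mul_mul (hv : v ∈ unitary R) : p * v = v * (star v * (p * v)) := by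
  rw [← mul_assoc v, Unitary.mul_star_self_of_mem hv, one_mul]

theorem isStarProjection_star_mul_mul (hp : IsStarProjection p) (hv : v ∈ unitary R) :
    IsStarProjection (star v * (p * v)) where
  isIdempotentElem := by
    rw [IsIdempotentElem, mul_assoc, mul_assoc p, ← mul_eq_mul_star_mul_mul hv, ← mul_assoc p,
      hp.isIdempotentElem.eq]
  isSelfAdjoint := by
    rw [← mul_assoc]
    exact hp.isSelfAdjoint.conjugate' v

end StarMul

section CStarAlgebra

variable {A : Type*} [CStarAlgebra A] [PartialOrder A] [StarOrderedRing A] {u v p q : A}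

theorem mul_eq_zero_of_add_le_one (hp : IsStarProjection p) (hq : IsStarProjection q)
    (h : p + q ≤ 1) : p * q = 0 := by
  have hpq : p * (1 - q) = p := (hp.le_iff_mul_eq_left hq.one_sub).1 (le_sub_right_of_add_le h)
  rwa [mul_sub, mul_one, sub_eq_self] at hpq

theorem pairwise_mul_eq_zero_of_sum_le_one {ι : Type*} [Fintype ι] {p : ι → A}
    (hp : ∀ i, IsStarProjection (p i)) (h : ∑ i, p i ≤ 1) : Pairwise fun i j => p i * p j = 0 :=
  fun i j hij => mul_eq_zero_of_add_le_one (hp i) (hp j) <|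
    (Finset.add_le_sum (fun k _ => (hp k).nonneg) (Finset.mem_univ i) (Finset.mem_univ j) hij).trans
      h

theorem commute_bclSymbol (hu : u ∈ unitary A) (hv : v ∈ unitary A) (hp : IsStarProjection p)
    (hq : IsStarProjection q) (huv : Commute u v)
    (hpq : p + star u * (q * u) = q + star v * (p * v)) (hle : p + star u * (q * u) ≤ 1) :
    Commute (bclSymbol u p) (bclSymbol v q) := by
  have horth_q : star v * (p * v) * q = 0 :=
    mul_eq_zero_of_add_le_one (isStarProjection_star_mul_mul hp hv) hq (by rwa [add_comm, ← hpq])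
  have horth_p : star u * (q * u) * p = 0 :=
    mul_eq_zero_of_add_le_one (isStarProjection_star_mul_mul hq hu) hp (by rwa [add_comm])
  calc bclSymbol u p * bclSymbol v q
      = bclSymbol (u * v) (q + star v * (p * v)) :=
        bclSymbol_mul_bclSymbol (mul_eq_mul_star_mul_mul hv) horth_q
    _ = bclSymbol (v * u) (p + star u * (q * u)) := by rw [huv.eq, hpq]
    _ = bclSymbol v q * bclSymbol u p :=
        (bclSymbol_mul_bclSymbol (mul_eq_mul_star_mul_mul hu) horth_p).symm

end CStarAlgebra

section PrefixProd

variable {E : Type*} [NormedAddCommGroup E] [InnerProductSpace ℂ E] {n : ℕ}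

theorem prefixProd_castSucc (U : Fin (n + 1) → E →L[ℂ] E) (k : Fin n) :
    prefixProd U k.castSucc = prefixProd (fun i => U i.castSucc) k := by
  simp [prefixProd, List.finRange_succ_last, List.filter_map, Function.comp_def, Fin.le_last]

theorem prefixProd_last (U : Fin (n + 1) → E →L[ℂ] E) :
    prefixProd U (Fin.last n) = (List.ofFn fun i => U i.castSucc).reverse.prod := by
  simp [prefixProd, List.finRange_succ_last, List.filter_map, Function.comp_def, List.ofFn_eq_map]

variable [CompleteSpace E]

theorem prefixProd_mem_unitary {U : Fin n → E →L[ℂ] E} (hU : ∀ i, U i ∈ unitary (E →L[ℂ] E))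
    (k : Fin n) : prefixProd U k ∈ unitary (E →L[ℂ] E) :=
  Submonoid.list_prod_mem _ (List.forall_mem_map.2 fun i _ => hU i)

/-- The `j`-th summand `U_1^* ⋯ U_{j-1}^* P_j U_{j-1} ⋯ U_1` of condition (d). -/
noncomputable def prefixConj (U P : Fin n → E →L[ℂ] E) (j : Fin n) : E →L[ℂ] E :=
  star (prefixProd U j) * (P j * prefixProd U j)

theorem prod_reverse_ofFn_bclSymbol {n : ℕ} {U P : Fin n → E →L[ℂ] E}
    (hU : ∀ i, U i ∈ unitary (E →L[ℂ] E))
    (horth : Pairwise fun i j => prefixConj U P i * prefixConj U P j = 0) :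
    (List.ofFn fun i => bclSymbol (U i) (P i)).reverse.prod =
      bclSymbol (List.ofFn U).reverse.prod (∑ j, prefixConj U P j) := by
  induction n with
  | zero => simp [bclSymbol_one_zero]
  | succ n ih =>
    have hcast (j : Fin n) : prefixConj U P j.castSucc =
        prefixConj (fun i => U i.castSucc) (fun i => P i.castSucc) j := by
      rw [prefixConj, prefixProd_castSucc, prefixConj]
    have ih' := ih (P := fun i => P i.castSucc) (fun i => hU i.castSucc) fun i j hij => by
      simp only [← hcast]
      exact horth ((Fin.castSucc_injective n).ne hij)
    have hlast : prefixConj U P (Fin.last n) * ∑ j : Fin n, prefixConj U P j.castSucc = 0 := by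
      rw [Finset.mul_sum]
      exact Finset.sum_eq_zero fun j _ => horth (Fin.castSucc_lt_last j).ne'
    simp only [← hcast, ← prefixProd_last] at ih'
    rw [List.ofFn_succ_last, List.reverse_concat, List.prod_cons, ih', List.ofFn_succ_last,
      List.reverse_concat, List.prod_cons, ← prefixProd_last, Fin.sum_univ_castSucc]
    exact bclSymbol_mul_bclSymbol (mul_eq_mul_star_mul_mul (prefixProd_mem_unitary hU _)) hlast

theorem prod_ofFn_bclSymbol_eq_X {U P : Fin n → E →L[ℂ] E}
    (hU : ∀ i, U i ∈ unitary (E →L[ℂ] E)) (hP : ∀ i, IsStarProjection (P i))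
    (hUU : ∀ i j, Commute (U i) (U j))
    (hcomm : ∀ i j, Commute (bclSymbol (U i) (P i)) (bclSymbol (U j) (P j)))
    (hprod : (List.ofFn U).prod = 1) (hsum : ∑ j, prefixConj U P j = 1) :
    (List.ofFn fun i => bclSymbol (U i) (P i)).prod = X := by
  have hproj (j : Fin n) : IsStarProjection (prefixConj U P j) :=
    isStarProjection_star_mul_mul (hP j) (prefixProd_mem_unitary hU j)
  rw [← prod_reverse_ofFn_of_commute hcomm,
    prod_reverse_ofFn_bclSymbol hU (pairwise_mul_eq_zero_of_sum_le_one hproj hsum.le),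
    prod_reverse_ofFn_of_commute hUU, hprod, hsum, bclSymbol_one_one]

end PrefixProd

section HasSymbol

variable {𝕜 E : Type*} [NormedField 𝕜] [NormedAddCommGroup E] [NormedSpace 𝕜 E]
  {p : ENNReal} [Fact (1 ≤ p)] {M N : lp (fun _ : ℕ => E) p →L[𝕜] lp (fun _ : ℕ => E) p}
  {φ ψ : PowerSeries (E →L[𝕜] E)}

/-- `M` is multiplication by the operator-valued symbol `φ`, where a sequence in `ℓ^p(ℕ, E)` is
read as the coefficient sequence of a power series. -/
def HasSymbol (M : lp (fun _ : ℕ => E) p →L[𝕜] lp (fun _ : ℕ => E) p)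
    (φ : PowerSeries (E →L[𝕜] E)) : Prop :=
  ∀ f m, M f m = ∑ k ∈ antidiagonal m, coeff k.1 φ (f k.2)

namespace HasSymbol

theorem unique (hM : HasSymbol M φ) (hN : HasSymbol N φ) : M = N := by
  ext f m
  rw [hM, hN]

theorem one : HasSymbol (1 : lp (fun _ : ℕ => E) p →L[𝕜] lp (fun _ : ℕ => E) p) 1 := by
  rintro f (_ | m)
  · simp
  · simp [Finset.Nat.sum_antidiagonal_succ, PowerSeries.coeff_one]

theorem mul (hM : HasSymbol M φ) (hN : HasSymbol N ψ) : HasSymbol (M * N) (φ * ψ) := by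
  intro f m
  simp only [mul_apply_eq_comp, hM (N f), hN f, PowerSeries.coeff_mul, map_sum, sum_apply,
    Finset.sum_sigma']
  apply Finset.sum_nbij' (fun ⟨⟨i, _⟩, ⟨k, l⟩⟩ => ⟨(i + k, l), (i, k)⟩)
    (fun ⟨⟨_, j⟩, ⟨k, l⟩⟩ => ⟨(k, l + j), (l, j)⟩) <;> simp <;> grind

theorem list_prod {ι : Type*} {M : ι → lp (fun _ : ℕ => E) p →L[𝕜] lp (fun _ : ℕ => E) p}
    {φ : ι → PowerSeries (E →L[𝕜] E)} (h : ∀ i, HasSymbol (M i) (φ i)) (l : List ι) :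
    HasSymbol (l.map M).prod (l.map φ).prod := by
  induction l with
  | nil => exact one
  | cons i l ih => exact (h i).mul ih

theorem commute (hM : HasSymbol M φ) (hN : HasSymbol N ψ) (h : Commute φ ψ) : Commute M N :=
  (hM.mul hN).unique (h.eq ▸ hN.mul hM)

end HasSymbol

theorem hasSymbol_C_add_X_mul_C_iff {A B : E →L[𝕜] E} :
    HasSymbol M (C A + X * C B) ↔
      ∀ f, M f 0 = A (f 0) ∧ ∀ m : ℕ, M f (m + 1) = A (f (m + 1)) + B (f m) := by
  have hsum (f : lp (fun _ : ℕ => E) p) (m : ℕ) :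
      ∑ k ∈ antidiagonal (m + 1),
        (coeff k.1 (C A + X * C B) : E →L[𝕜] E) (f k.2) =
        A (f (m + 1)) + B (f m) := by
    cases m <;>
      simp [Finset.Nat.sum_antidiagonal_succ, PowerSeries.coeff_C, PowerSeries.coeff_X]
  refine forall_congr' fun f => Nat.and_forall_add_one.symm.trans ?_
  simp only [hsum]
  simp

theorem hasSymbol_bclSymbol_iff {U P : E →L[𝕜] E} :
    HasSymbol M (bclSymbol U P) ↔ ∀ f, M f 0 = U ((1 - P) (f 0)) ∧
      ∀ m : ℕ, M f (m + 1) = U ((1 - P) (f (m + 1))) + U (P (f m)) := by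
  rw [bclSymbol_eq_C_add_X_mul_C, hasSymbol_C_add_X_mul_C_iff]
  rfl

theorem hasSymbol_X_iff :
    HasSymbol M X ↔ ∀ f, M f 0 = 0 ∧ ∀ m : ℕ, M f (m + 1) = f m := by
  simpa using hasSymbol_C_add_X_mul_C_iff (M := M) (A := 0) (B := 1)

end HasSymbol

section Isometry

variable {𝕜 E : Type*} [RCLike 𝕜] [NormedAddCommGroup E] [InnerProductSpace 𝕜 E]

theorem hasSum_norm_sq {ι : Type*} {F : ι → Type*} [∀ i, NormedAddCommGroup (F i)] (f : lp F 2) :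
    HasSum (fun i => ‖f i‖ ^ 2) (‖f‖ ^ 2) := by
  simpa using lp.hasSum_norm (p := 2) (by norm_num) f

variable [CompleteSpace E] {A B : E →L[𝕜] E}

theorem norm_add_sq_of_star_mul_eq_zero (h : star A * B = 0) (x y : E) :
    ‖A x + B y‖ ^ 2 = ‖A x‖ ^ 2 + ‖B y‖ ^ 2 := by
  have hxy : inner 𝕜 (A x) (B y) = 0 := by
    rw [← adjoint_inner_right, ← star_eq_adjoint, ← mul_apply_eq_comp, h, zero_apply,
      inner_zero_right]
  simpa only [sq] using norm_add_sq_eq_norm_sq_add_norm_sq_of_inner_eq_zero _ _ hxy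

theorem norm_sq_add_norm_sq_of_star_mul_self_add (h : star A * A + star B * B = 1) (x : E) :
    ‖A x‖ ^ 2 + ‖B x‖ ^ 2 = ‖x‖ ^ 2 := by
  have hx : (adjoint A ∘L A) x + (adjoint B ∘L B) x = x := congr($h x)
  rw [apply_norm_sq_eq_inner_adjoint_right, apply_norm_sq_eq_inner_adjoint_right, ← map_add,
    ← inner_add_right, hx, inner_self_eq_norm_sq]

theorem HasSymbol.norm_map {M : lp (fun _ : ℕ => E) 2 →L[𝕜] lp (fun _ : ℕ => E) 2}
    (hM : HasSymbol M (C A + X * C B)) (horth : star A * B = 0)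
    (hone : star A * A + star B * B = 1) (f : lp (fun _ : ℕ => E) 2) : ‖M f‖ = ‖f‖ := by
  have hMf := hasSymbol_C_add_X_mul_C_iff.1 hM f
  have hf : HasSum (fun m => ‖A (f m)‖ ^ 2 + ‖B (f m)‖ ^ 2) (‖f‖ ^ 2) := by
    simpa only [norm_sq_add_norm_sq_of_star_mul_self_add hone] using hasSum_norm_sq f
  have hA : Summable fun m => ‖A (f m)‖ ^ 2 :=
    hf.summable.of_nonneg_of_le (fun _ => sq_nonneg _) fun _ => le_add_of_nonneg_right (sq_nonneg _)
  have hB : Summable fun m => ‖B (f m)‖ ^ 2 :=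
    hf.summable.of_nonneg_of_le (fun _ => sq_nonneg _) fun _ => le_add_of_nonneg_left (sq_nonneg _)
  rw [← sq_eq_sq₀ (norm_nonneg _) (norm_nonneg _)]
  calc ‖M f‖ ^ 2
      = ‖M f 0‖ ^ 2 + ∑' m, ‖M f (m + 1)‖ ^ 2 := by
        rw [← (hasSum_norm_sq (M f)).tsum_eq, (hasSum_norm_sq (M f)).summable.tsum_eq_zero_add]
    _ = ‖A (f 0)‖ ^ 2 + ∑' m, (‖A (f (m + 1))‖ ^ 2 + ‖B (f m)‖ ^ 2) := by
        simp only [hMf.1, hMf.2, norm_add_sq_of_star_mul_eq_zero horth]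
    _ = ∑' m, ‖A (f m)‖ ^ 2 + ∑' m, ‖B (f m)‖ ^ 2 := by
        rw [((summable_nat_add_iff 1).2 hA).tsum_add hB, hA.tsum_eq_zero_add, add_assoc]
    _ = ‖f‖ ^ 2 := by rw [← hA.tsum_add hB, hf.tsum_eq]

theorem norm_map_of_hasSymbol_bclSymbol
    {M : lp (fun _ : ℕ => E) 2 →L[𝕜] lp (fun _ : ℕ => E) 2} {U P : E →L[𝕜] E}
    (hM : HasSymbol M (bclSymbol U P)) (hU : U ∈ unitary (E →L[𝕜] E)) (hP : IsStarProjection P)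
    (f : lp (fun _ : ℕ => E) 2) : ‖M f‖ = ‖f‖ := by
  have hstar (S T : E →L[𝕜] E) : star (U * S) * (U * T) = star S * T := by
    rw [star_mul, mul_assoc, ← mul_assoc (star U), Unitary.star_mul_self_of_mem hU, one_mul]
  rw [bclSymbol_eq_C_add_X_mul_C] at hM
  refine hM.norm_map ?_ ?_ f
  · rw [hstar, hP.one_sub.isSelfAdjoint.star_eq, hP.one_sub_mul_self]
  · rw [hstar, hstar, hP.one_sub.isSelfAdjoint.star_eq, hP.isSelfAdjoint.star_eq,
      hP.one_sub.isIdempotentElem.eq, hP.isIdempotentElem.eq, sub_add_cancel]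

end Isometry

/-- A model `n`-isometry is an `n`-isometry: if `U_1,…,U_n` are commuting unitaries with
`U_1⋯U_n = I` and `P_1,…,P_n` are orthogonal projections satisfying the
Berger–Coburn–Lebow/Bercovici–Douglas–Foias conditions, then the multiplication operators
`M_i = M_{Φ_i}` with `Φ_i(z) = U_i(P_i^⊥ + z P_i)` on `H²_E(𝔻) ≅ ℓ²(ℕ, E)` are commuting
isometries whose product is the unilateral shift. -/
theorem stmt11 {E : Type*} [NormedAddCommGroup E] [InnerProductSpace ℂ E] [CompleteSpace E]
    {n : ℕ} (hn : 2 ≤ n)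
    (U P : Fin n → E →L[ℂ] E)
    (hU : ∀ i, ContinuousLinearMap.adjoint (U i) * U i = 1 ∧
      U i * ContinuousLinearMap.adjoint (U i) = 1)
    (hP : ∀ i, IsSelfAdjoint (P i) ∧ P i * P i = P i)
    (ha : ∀ i j, Commute (U i) (U j))
    (hb : (List.ofFn U).prod = 1)
    (hc : ∀ i j, i ≠ j →
      (P i + ContinuousLinearMap.adjoint (U i) * (P j * U i)
          = P j + ContinuousLinearMap.adjoint (U j) * (P i * U j)) ∧
      (1 - (P i + ContinuousLinearMap.adjoint (U i) * (P j * U i))).IsPositive)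
    (hd : ∑ j : Fin n,
        ContinuousLinearMap.adjoint (prefixProd U j) * (P j * prefixProd U j) = 1)
    (M : Fin n → (lp (fun _ : ℕ => E) 2 →L[ℂ] lp (fun _ : ℕ => E) 2))
    (hM : ∀ (i : Fin n) (f : lp (fun _ : ℕ => E) 2),
      M i f 0 = U i ((1 - P i) (f 0)) ∧
      ∀ m : ℕ, M i f (m + 1) = U i ((1 - P i) (f (m + 1))) + U i (P i (f m))) :
    (∀ (i : Fin n) (f : lp (fun _ : ℕ => E) 2), ‖M i f‖ = ‖f‖) ∧
    (∀ i j, Commute (M i) (M j)) ∧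
    (∀ f : lp (fun _ : ℕ => E) 2,
      (List.ofFn M).prod f 0 = 0 ∧ ∀ m : ℕ, (List.ofFn M).prod f (m + 1) = f m) := by
  have hproj (i : Fin n) : IsStarProjection (P i) := ⟨(hP i).2, (hP i).1⟩
  have hsym (i : Fin n) : HasSymbol (M i) (bclSymbol (U i) (P i)) :=
    hasSymbol_bclSymbol_iff.2 (hM i)
  have hcomm (i j : Fin n) : Commute (bclSymbol (U i) (P i)) (bclSymbol (U j) (P j)) := by
    rcases eq_or_ne i j with rfl | hij
    · exact Commute.refl _
    · obtain ⟨hsymm, hpos⟩ := hc i j hij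
      exact commute_bclSymbol (hU i) (hU j) (hproj i) (hproj j) (ha i j) hsymm
        ((le_def _ _).2 hpos)
  have hprod : HasSymbol (List.ofFn M).prod X := by
    rw [← prod_ofFn_bclSymbol_eq_X hU hproj ha hcomm hb hd, List.ofFn_eq_map, List.ofFn_eq_map]
    exact HasSymbol.list_prod hsym _
  exact ⟨fun i => norm_map_of_hasSymbol_bclSymbol (hsym i) (hU i) (hproj i),
    fun i j => (hsym i).commute (hsym j) (hcomm i j), hasSymbol_X_iff.1 hprod⟩
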